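/- If C is a permutation class containing only finitely many simple permutations, then the generating function of the set of even permutations in C is algebraic over ℚ[x]. -/

import Mathlib

/-- A permutation of length `n`. -/
abbrev Perm (n : ℕ) := Equiv.Perm (Fin n)

/-- `σ` is contained in `π`: there is a strictly increasing sequence of indices of `π`
on which `π` is order isomorphic to `σ`. -/
def Contains {m n : ℕ} (σ : Perm m) (π : Perm n) : Prop :=
  ∃ f : Fin m → Fin n, StrictMono f ∧ ∀ s t : Fin m, π (f s) < π (f t) ↔ σ s < σ t

/-- A permutation class: a downset in the containment order. -/
def IsPermClass (C : ∀ n, Set (Perm n)) : Prop :=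
  ∀ ⦃m n : ℕ⦄ (σ : Perm m) (π : Perm n), π ∈ C n → Contains σ π → σ ∈ C m

/-- A set of contiguous values. -/
def IsRange {n : ℕ} (I : Finset (Fin n)) : Prop :=
  ∀ ⦃i j l : Fin n⦄, i ∈ I → l ∈ I → i ≤ j → j ≤ l → j ∈ I

/-- An interval of `π`: a set of contiguous indices mapped to a set of contiguous values. -/
def IsPermInterval {n : ℕ} (π : Perm n) (I : Finset (Fin n)) : Prop :=
  IsRange I ∧ IsRange (I.image π)

/-- A permutation is simple if its only intervals have size `0`, `1`, or `n`. -/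
def IsSimple {n : ℕ} (π : Perm n) : Prop :=
  ∀ I : Finset (Fin n), IsPermInterval π I → I.card ≤ 1 ∨ I.card = n

/-- The set of simple permutations belonging to the class `C` is finite. -/
def FinitelyManySimples (C : ∀ n, Set (Perm n)) : Prop :=
  {p : Σ n : ℕ, Perm n | p.2 ∈ C p.1 ∧ IsSimple p.2}.Finite

/-- The generating function `∑_{n ≥ 1} |S_n| xⁿ` of a set of permutations. -/
noncomputable def genFun (S : ∀ n, Set (Perm n)) : PowerSeries ℚ :=
  PowerSeries.mk fun n => if n = 0 then 0 else (Nat.card (S n) : ℚ)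

/-- A power series `f` is algebraic over `ℚ[x]` if there is a nonzero polynomial
`P(x,y) ∈ ℚ[x][y]` with `P(x,f) = 0`. -/
def IsAlgebraicOverQx (f : PowerSeries ℚ) : Prop :=
  ∃ P : Polynomial (Polynomial ℚ), P ≠ 0 ∧
    Polynomial.eval₂ Polynomial.coeToPowerSeries.ringHom f P = 0

/-! ### Inflations of permutations -/

/-- Permutations of arbitrary length. -/
abbrev SizedPerm := Σ n : ℕ, Perm n

/-- The pattern formed by the entries of `δ` at the indices in `I` is contained in `π`. -/
def EmbedsOn {k n : ℕ} (δ : Perm k) (I : Set (Fin k)) (π : Perm n) : Prop :=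
  ∃ g : Fin k → Fin n, ∀ s ∈ I, ∀ t ∈ I,
    (s < t → g s < g t) ∧ (δ s < δ t → π (g s) < π (g t))

/-- The map `c` sends the indices of `π` to those of `σ` so that its fibres are intervals of `π`
whose relative order is given by `σ`. -/
structure IsQuotient {m n : ℕ} (σ : Perm m) (π : Perm n) (c : Fin n → Fin m) : Prop where
  surj : Function.Surjective c
  pos : ∀ s t, c s < c t → s < t
  val : ∀ s t, σ (c s) < σ (c t) → π s < π t

/-- `π` is the inflation of `σ` by the permutations `α i`: the map `c` sends an index of `π` to its
block, and `f i` enumerates the indices of the `i`-th block in increasing order. -/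
structure IsInflation {m n : ℕ} (σ : Perm m) (α : Fin m → SizedPerm) (π : Perm n)
    (c : Fin n → Fin m) (f : ∀ i, Fin (α i).1 → Fin n) : Prop extends IsQuotient σ π c where
  mono : ∀ i a b, a < b → f i a < f i b
  vmono : ∀ i a b, (α i).2 a < (α i).2 b → π (f i a) < π (f i b)
  color : ∀ i a, c (f i a) = i
  cover : ∀ s, ∃ a, f (c s) a = s

/-- `π` is the inflation of `σ` by the permutations `α i`. -/
def Inflates {m n : ℕ} (σ : Perm m) (α : Fin m → SizedPerm) (π : Perm n) : Prop :=
  ∃ c f, IsInflation σ α π c f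

theorem lt_iff_lt_of_lt_imp_lt {ι α β : Type*} [LinearOrder α] [LinearOrder β] {p : ι → α}
    {q : ι → β} (hp : Function.Injective p) (h : ∀ i j, p i < p j → q i < q j) (i j : ι) :
    q i < q j ↔ p i < p j := by
  refine ⟨fun hq => ?_, h i j⟩
  by_contra hn
  rcases (not_lt.1 hn).lt_or_eq with hlt | heq
  · exact lt_asymm hq (h _ _ hlt)
  · exact hq.ne (by rw [hp heq])

theorem contains_iff_embedsOn {m n : ℕ} {σ : Perm m} {π : Perm n} :
    Contains σ π ↔ EmbedsOn σ Set.univ π := by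
  constructor
  · rintro ⟨f, hf, h⟩
    exact ⟨f, fun s _ t _ => ⟨fun hst => hf hst, (h s t).2⟩⟩
  · rintro ⟨f, h⟩
    refine ⟨f, fun s t hst => (h s trivial t trivial).1 hst, fun s t => ?_⟩
    exact lt_iff_lt_of_lt_imp_lt (p := σ) (q := fun s => π (f s)) σ.injective
      (fun i j hij => (h i trivial j trivial).2 hij) s t

theorem contains_of_lt_imp_lt {m n : ℕ} {σ : Perm m} {π : Perm n} (f : Fin m → Fin n)
    (h₁ : ∀ s t, s < t → f s < f t) (h₂ : ∀ s t, σ s < σ t → π (f s) < π (f t)) :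
    Contains σ π :=
  contains_iff_embedsOn.2 ⟨f, fun s _ t _ => ⟨h₁ s t, h₂ s t⟩⟩

theorem Contains.refl {n : ℕ} (π : Perm n) : Contains π π :=
  ⟨id, strictMono_id, fun _ _ => Iff.rfl⟩

theorem EmbedsOn.trans_contains {k m n : ℕ} {δ : Perm k} {I : Set (Fin k)} {σ : Perm m}
    {π : Perm n} (h : EmbedsOn δ I σ) (h' : Contains σ π) : EmbedsOn δ I π := by
  obtain ⟨g, hg⟩ := h
  obtain ⟨f, hf, hv⟩ := h'
  exact ⟨fun s => f (g s), fun s hs t ht => ⟨fun hst => hf ((hg s hs t ht).1 hst),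
    fun hst => (hv _ _).2 ((hg s hs t ht).2 hst)⟩⟩

theorem Contains.trans {k m n : ℕ} {δ : Perm k} {σ : Perm m} {π : Perm n}
    (h : Contains δ σ) (h' : Contains σ π) : Contains δ π :=
  contains_iff_embedsOn.2 ((contains_iff_embedsOn.1 h).trans_contains h')

theorem Contains.le {m n : ℕ} {σ : Perm m} {π : Perm n} (h : Contains σ π) : m ≤ n := by
  obtain ⟨f, hf, -⟩ := h
  simpa using Fintype.card_le_of_injective f hf.injective

theorem Fin.strictMono_eq_id {n : ℕ} {f : Fin n → Fin n} (hf : StrictMono f) : f = id := by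
  have := Subsingleton.elim
    (StrictMono.orderIsoOfSurjective f hf (Finite.injective_iff_surjective.1 hf.injective))
    (OrderIso.refl (Fin n))
  funext i
  exact congrArg (fun e : Fin n ≃o Fin n => e i) this

theorem perm_eq_of_lt_imp_lt {n : ℕ} {σ π : Perm n}
    (h : ∀ s t, σ s < σ t → π s < π t) : σ = π := by
  have hf : StrictMono fun a => π (σ.symm a) := fun a b hab => h _ _ (by simpa using hab)
  ext s
  have := congrFun (Fin.strictMono_eq_id hf) (σ s)
  simp at this
  rw [this]

theorem Contains.antisymm_of_size {m n : ℕ} {σ : Perm m} {π : Perm n} (h : Contains σ π)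
    (hmn : n ≤ m) : (⟨m, σ⟩ : SizedPerm) = ⟨n, π⟩ := by
  obtain rfl : m = n := le_antisymm h.le hmn
  obtain ⟨f, hf, hv⟩ := h
  obtain rfl := Fin.strictMono_eq_id hf
  rw [perm_eq_of_lt_imp_lt (σ := σ) (π := π) fun s t => (hv s t).2]

theorem exists_increasing_enumeration {X A : Type*} [Finite X] [LinearOrder A] {q : X → A}
    (hq : Function.Injective q) {n : ℕ} (hn : Nat.card X = n) :
    ∃ e : Fin n ≃ X, ∀ a b, a < b → q (e a) < q (e b) := by
  let _ := Fintype.ofFinite X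
  let _ := LinearOrder.lift' q hq
  let e := monoEquivOfFin X (k := n) (by rw [← hn, Nat.card_eq_fintype_card])
  exact ⟨e.toEquiv, fun a b hab => e.strictMono hab⟩

/-- The pattern of a finite set of points with distinct coordinates `p` and `v`. -/
theorem exists_pattern {X A B : Type*} [Finite X] [LinearOrder A] [LinearOrder B] {p : X → A}
    {v : X → B} (hp : Function.Injective p) (hv : Function.Injective v) {n : ℕ}
    (hn : Nat.card X = n) :
    ∃ (π : Perm n) (e : Fin n ≃ X), (∀ a b, a < b → p (e a) < p (e b)) ∧
      ∀ a b, π a < π b → v (e a) < v (e b) := by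
  obtain ⟨e₁, h₁⟩ := exists_increasing_enumeration hp hn
  obtain ⟨e₂, h₂⟩ := exists_increasing_enumeration hv hn
  refine ⟨e₁.trans e₂.symm, e₁, h₁, fun a b hab => ?_⟩
  simpa using h₂ _ _ hab

section IsQuotient

variable {m n : ℕ} {σ : Perm m} {π : Perm n} {c : Fin n → Fin m}

theorem IsQuotient.monotone (h : IsQuotient σ π c) : Monotone c := fun s t hst => by
  by_contra hn
  exact absurd (h.pos _ _ (not_le.1 hn)) (not_lt.2 hst)

theorem IsQuotient.vmonotone (h : IsQuotient σ π c) {s t : Fin n} (hst : π s ≤ π t) :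
    σ (c s) ≤ σ (c t) := by
  by_contra hn
  exact absurd (h.val _ _ (not_le.1 hn)) (not_lt.2 hst)

theorem IsQuotient.exists_isInflation (h : IsQuotient σ π c) :
    ∃ α f, IsInflation σ α π c f := by
  have key : ∀ i, ∃ (α : SizedPerm) (e : Fin α.1 ≃ {s // c s = i}),
      (∀ a b, a < b → (e a : Fin n) < e b) ∧ ∀ a b, α.2 a < α.2 b → π (e a) < π (e b) := by
    intro i
    obtain ⟨α, e, h₁, h₂⟩ := exists_pattern (X := {s // c s = i}) (p := Subtype.val)
      (v := fun s => π s) Subtype.val_injective (π.injective.comp Subtype.val_injective) rfl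
    exact ⟨⟨_, α⟩, e, h₁, h₂⟩
  choose α e h₁ h₂ using key
  refine ⟨α, fun i a => (e i a : Fin n), { h with
    mono := h₁, vmono := h₂, color := fun i a => (e i a).2, cover := fun s => ?_ }⟩
  exact ⟨(e _).symm ⟨s, rfl⟩, by simp⟩

end IsQuotient

section IsInflation

variable {m n : ℕ} {σ : Perm m} {α : Fin m → SizedPerm} {π : Perm n} {c : Fin n → Fin m}
  {f : ∀ i, Fin (α i).1 → Fin n}

theorem IsInflation.strictMono (h : IsInflation σ α π c f) (i : Fin m) : StrictMono (f i) :=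
  fun a b => h.mono i a b

theorem IsInflation.size_pos (h : IsInflation σ α π c f) (i : Fin m) : 0 < (α i).1 := by
  obtain ⟨s, rfl⟩ := h.surj i
  obtain ⟨a, -⟩ := h.cover s
  exact a.pos

theorem IsInflation.exists_index (h : IsInflation σ α π c f) (i : Fin m) :
    ∃ b : Fin n → Fin (α i).1, ∀ s, c s = i → f i (b s) = s := by
  choose a ha using h.cover
  refine ⟨fun s => if hs : c s = i then hs ▸ a s else ⟨0, h.size_pos i⟩, ?_⟩
  rintro s rfl
  simpa using ha s

/-- The indices of an inflation, grouped by blocks. -/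
noncomputable def IsInflation.sigmaEquiv (h : IsInflation σ α π c f) :
    (Σ i, Fin (α i).1) ≃ Fin n :=
  Equiv.ofBijective (fun x => f x.1 x.2) <| by
    constructor
    · rintro ⟨i, a⟩ ⟨j, b⟩ hab
      obtain rfl : i = j := by
        rw [← h.color i a, ← h.color j b]
        exact congrArg c hab
      exact congrArg (Sigma.mk i) ((h.strictMono i).injective hab)
    · intro s
      obtain ⟨a, ha⟩ := h.cover s
      exact ⟨⟨_, a⟩, ha⟩

theorem IsInflation.sigmaEquiv_apply (h : IsInflation σ α π c f) (i : Fin m) (a : Fin (α i).1) :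
    h.sigmaEquiv ⟨i, a⟩ = f i a := rfl

theorem IsInflation.size_eq (h : IsInflation σ α π c f) : n = ∑ i, (α i).1 := by
  simpa using (Fintype.card_congr h.sigmaEquiv).symm

theorem IsInflation.block_contains (h : IsInflation σ α π c f) (i : Fin m) :
    Contains (α i).2 π :=
  contains_of_lt_imp_lt (f i) (h.mono i) (h.vmono i)

theorem IsQuotient.contains (h : IsQuotient σ π c) : Contains σ π := by
  obtain ⟨g, hg⟩ := h.surj.hasRightInverse
  refine contains_of_lt_imp_lt g (fun s t hst => h.pos _ _ ?_) (fun s t hst => h.val _ _ ?_)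
  · rwa [hg, hg]
  · rwa [hg, hg]

/-- Whether a pattern embeds in an inflation is governed by the patterns contained in the
blocks. -/
theorem Inflates.embedsOn {n' k : ℕ} {α' : Fin m → SizedPerm} {π' : Perm n'} {δ : Perm k}
    (h : Inflates σ α π) (h' : Inflates σ α' π')
    (hα : ∀ i I, EmbedsOn δ I (α i).2 → EmbedsOn δ I (α' i).2) {I : Set (Fin k)}
    (hI : EmbedsOn δ I π) : EmbedsOn δ I π' := by
  obtain ⟨c, f, h⟩ := h
  obtain ⟨c', f', h'⟩ := h'
  obtain ⟨g, hg⟩ := hI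
  have key : ∀ i, EmbedsOn δ {s | s ∈ I ∧ c (g s) = i} (α' i).2 := by
    intro i
    apply hα
    obtain ⟨b, hb⟩ := h.exists_index i
    refine ⟨fun s => b (g s), fun s hs t ht => ⟨fun hst => ?_, fun hst => ?_⟩⟩
    · rw [← (h.strictMono i).lt_iff_lt, hb _ hs.2, hb _ ht.2]
      exact (hg s hs.1 t ht.1).1 hst
    · rw [← lt_iff_lt_of_lt_imp_lt (α i).2.injective (h.vmono i), hb _ hs.2, hb _ ht.2]
      exact (hg s hs.1 t ht.1).2 hst
  choose φ hφ using key
  refine ⟨fun s => f' (c (g s)) (φ (c (g s)) s), fun s hs t ht => ⟨fun hst => ?_, fun hst => ?_⟩⟩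
  · rcases (h.monotone ((hg s hs t ht).1 hst).le).lt_or_eq with hlt | heq
    · apply h'.pos
      rwa [h'.color, h'.color]
    · beta_reduce
      rw [← heq]
      exact h'.mono _ _ _ ((hφ _ s ⟨hs, rfl⟩ t ⟨ht, heq.symm⟩).1 hst)
  · rcases (h.vmonotone ((hg s hs t ht).2 hst).le).lt_or_eq with hlt | heq
    · apply h'.val
      rwa [h'.color, h'.color]
    · replace heq := σ.injective heq
      beta_reduce
      rw [← heq]
      exact h'.vmono _ _ _ ((hφ _ s ⟨hs, rfl⟩ t ⟨ht, heq.symm⟩).2 hst)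

theorem Inflates.contains {n' : ℕ} {α' : Fin m → SizedPerm} {π' : Perm n'}
    (h : Inflates σ α π) (h' : Inflates σ α' π') (hα : ∀ i, Contains (α i).2 (α' i).2) :
    Contains π π' :=
  contains_iff_embedsOn.2 <| h.embedsOn h' (fun i _ hI => hI.trans_contains (hα i))
    (contains_iff_embedsOn.1 (Contains.refl π))

theorem Inflates.unique {n' : ℕ} {π' : Perm n'} (h : Inflates σ α π) (h' : Inflates σ α π') :
    (⟨n, π⟩ : SizedPerm) = ⟨n', π'⟩ :=
  (h.contains h' fun _ => Contains.refl _).antisymm_of_size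
    (h'.contains h fun _ => Contains.refl _).le

theorem exists_inflates (σ : Perm m) (α : Fin m → SizedPerm) (hα : ∀ i, 0 < (α i).1) :
    ∃ p : SizedPerm, Inflates σ α p.2 := by
  let q : (Σ i, Fin (α i).1) → Fin m ×ₗ ℕ := fun x => toLex (x.1, x.2.val)
  let v : (Σ i, Fin (α i).1) → Fin m ×ₗ ℕ := fun x => toLex (σ x.1, ((α x.1).2 x.2).val)
  have hq : Function.Injective q := by
    rintro ⟨i, a⟩ ⟨j, b⟩ hab
    simp only [q, EmbeddingLike.apply_eq_iff_eq, Prod.mk.injEq] at hab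
    obtain ⟨rfl, hab⟩ := hab
    rw [Fin.ext hab]
  have hv : Function.Injective v := by
    rintro ⟨i, a⟩ ⟨j, b⟩ hab
    simp only [v, EmbeddingLike.apply_eq_iff_eq, Prod.mk.injEq] at hab
    obtain ⟨rfl, hab⟩ := hab
    rw [(α i).2.injective (Fin.ext hab)]
  obtain ⟨π, e, h₁, h₂⟩ := exists_pattern hq hv rfl
  have h₁' := lt_iff_lt_of_lt_imp_lt (p := fun a => a) Function.injective_id h₁
  have h₂' := lt_iff_lt_of_lt_imp_lt π.injective h₂
  refine ⟨⟨_, π⟩, fun s => (e s).1, fun i a => e.symm ⟨i, a⟩, ⟨fun i => ?_, fun s t hst => ?_,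
    fun s t hst => ?_⟩, fun i a b hab => ?_, fun i a b hab => ?_, fun i a => ?_, fun s => ?_⟩
  · exact ⟨e.symm ⟨i, ⟨0, hα i⟩⟩, by simp⟩
  · rw [← h₁', Prod.Lex.toLex_lt_toLex]
    exact Or.inl hst
  · rw [← h₂', Prod.Lex.toLex_lt_toLex]
    exact Or.inl hst
  · rw [← h₁', e.apply_symm_apply, e.apply_symm_apply, Prod.Lex.toLex_lt_toLex]
    exact Or.inr ⟨rfl, hab⟩
  · rw [← h₂', e.apply_symm_apply, e.apply_symm_apply, Prod.Lex.toLex_lt_toLex]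
    exact Or.inr ⟨rfl, hab⟩
  · simp
  · exact ⟨(e s).2, by simp⟩

open Classical in
/-- The sign `-1` if `P` holds, and `1` otherwise. -/
noncomputable def negOneIf (P : Prop) : ℤˣ := if P then -1 else 1

theorem sign_eq_prod_negOneIf {k : ℕ} (ρ : Perm k) :
    Equiv.Perm.sign ρ = ∏ s, ∏ t, negOneIf (s < t ∧ ρ t < ρ s) := by
  rw [Equiv.Perm.sign_eq_prod_prod_Ioi]
  refine Finset.prod_congr rfl fun s _ => ?_
  rw [← Finset.prod_subset (Finset.subset_univ (Finset.Ioi s))]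
  · refine Finset.prod_congr rfl fun t ht => ?_
    rw [Finset.mem_Ioi] at ht
    rcases lt_or_gt_of_ne (ρ.injective.ne ht.ne) with h | h
    · simp [negOneIf, h, h.not_gt]
    · simp [negOneIf, h, h.not_gt, ht]
  · intro t _ ht
    rw [Finset.mem_Ioi] at ht
    simp [negOneIf, ht]

theorem IsInflation.sign_eq (h : IsInflation σ α π c f) :
    Equiv.Perm.sign π = ∏ i, ∏ j, if i = j then Equiv.Perm.sign (α i).2 else
      negOneIf (i < j ∧ σ j < σ i) ^ (((α i).1 % 2) * ((α j).1 % 2)) := by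
  rw [sign_eq_prod_negOneIf, ← h.sigmaEquiv.prod_comp, Fintype.prod_sigma]
  refine Finset.prod_congr rfl fun i _ => ?_
  simp_rw [← h.sigmaEquiv.prod_comp (fun t => negOneIf (_ < t ∧ _)), Fintype.prod_sigma]
  rw [Finset.prod_comm]
  refine Finset.prod_congr rfl fun j _ => ?_
  simp_rw [h.sigmaEquiv_apply]
  split_ifs with hij
  · subst hij
    rw [sign_eq_prod_negOneIf]
    refine Finset.prod_congr rfl fun a _ => Finset.prod_congr rfl fun b _ => ?_
    rw [(h.strictMono i).lt_iff_lt, lt_iff_lt_of_lt_imp_lt (α i).2.injective (h.vmono i)]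
  · have key : ∀ a b, (f i a < f j b ∧ π (f j b) < π (f i a)) = (i < j ∧ σ j < σ i) := by
      intro a b
      have hi := h.color i a
      have hj := h.color j b
      refine propext ⟨fun ⟨h₁, h₂⟩ => ⟨?_, ?_⟩, fun ⟨h₁, h₂⟩ => ⟨h.pos _ _ ?_, h.val _ _ ?_⟩⟩
      · have := h.monotone h₁.le
        rw [hi, hj] at this
        exact lt_of_le_of_ne this hij
      · have := h.vmonotone h₂.le
        rw [hi, hj] at this
        exact lt_of_le_of_ne this (σ.injective.ne (Ne.symm hij))
      · rwa [hi, hj]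
      · rwa [hi, hj]
    simp only [key, Finset.prod_const, Finset.card_univ, Fintype.card_fin, ← pow_mul]
    rw [Int.units_pow_eq_pow_mod_two, Nat.mul_mod, ← Int.units_pow_eq_pow_mod_two, mul_comm]

/-- The sign of an inflation depends only on the signs and the parities of the sizes of the
blocks. -/
theorem Inflates.sign_congr {n' : ℕ} {α' : Fin m → SizedPerm} {π' : Perm n'}
    (h : Inflates σ α π) (h' : Inflates σ α' π')
    (hs : ∀ i, Equiv.Perm.sign (α i).2 = Equiv.Perm.sign (α' i).2)
    (hp : ∀ i, (α i).1 % 2 = (α' i).1 % 2) :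
    Equiv.Perm.sign π = Equiv.Perm.sign π' := by
  obtain ⟨c, f, h⟩ := h
  obtain ⟨c', f', h'⟩ := h'
  rw [h.sign_eq, h'.sign_eq]
  simp only [hs, hp]

end IsInflation

/-! ### The substitution decomposition -/

theorem isPermInterval_iff {n : ℕ} {π : Perm n} {I : Finset (Fin n)} :
    IsPermInterval π I ↔ (∀ i ∈ I, ∀ l ∈ I, ∀ j, i < j → j < l → j ∈ I) ∧
      ∀ i ∈ I, ∀ l ∈ I, ∀ j, π i < π j → π j < π l → j ∈ I := by
  have key : ∀ {J : Finset (Fin n)}, IsRange J ↔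
      ∀ i ∈ J, ∀ l ∈ J, ∀ j, i < j → j < l → j ∈ J := by
    intro J
    refine ⟨fun h i hi l hl j hij hjl => h hi hl hij.le hjl.le, fun h i j l hi hl hij hjl => ?_⟩
    rcases hij.lt_or_eq with hij | rfl
    · rcases hjl.lt_or_eq with hjl | rfl
      · exact h i hi l hl j hij hjl
      · exact hl
    · exact hi
  rw [IsPermInterval, key, key]
  refine and_congr_right fun _ => ?_
  simp only [Finset.forall_mem_image]
  refine forall₂_congr fun i _ => forall₂_congr fun l _ => ?_
  rw [π.surjective.forall]
  simp

section Uniqueness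

variable {m m' n : ℕ} {σ : Perm m} {σ' : Perm m'} {π : Perm n} {c : Fin n → Fin m}
  {c' : Fin n → Fin m'}

/-- If `σ` is a simple quotient of `π` of length at least `3`, then the blocks of any other
nontrivial quotient are contained in those of `σ`. -/
theorem IsQuotient.eq_of_eq (h : IsQuotient σ π c) (h' : IsQuotient σ' π c') (hσ : IsSimple σ)
    (hm : 3 ≤ m) (hm' : 2 ≤ m') {s t : Fin n} (hst : c' s = c' t) : c s = c t := by
  classical
  let J : Finset (Fin m) := Finset.univ.filter fun j => ∃ x, c' x = c' s ∧ c x = j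
  have hJ : IsPermInterval σ J := by
    rw [isPermInterval_iff]
    constructor
    · intro i hi l hl j hij hjl
      obtain ⟨x, hx, rfl⟩ := (Finset.mem_filter.1 hi).2
      obtain ⟨z, hz, rfl⟩ := (Finset.mem_filter.1 hl).2
      obtain ⟨y, rfl⟩ := h.surj j
      have h₁ := h'.monotone (h.pos _ _ hij).le
      have h₂ := h'.monotone (h.pos _ _ hjl).le
      refine Finset.mem_filter.2 ⟨Finset.mem_univ _, y, le_antisymm ?_ ?_, rfl⟩
      · rwa [← hz]
      · rwa [← hx]
    · intro i hi l hl j hij hjl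
      obtain ⟨x, hx, rfl⟩ := (Finset.mem_filter.1 hi).2
      obtain ⟨z, hz, rfl⟩ := (Finset.mem_filter.1 hl).2
      obtain ⟨y, rfl⟩ := h.surj j
      have h₁ := h'.vmonotone (h.val _ _ hij).le
      have h₂ := h'.vmonotone (h.val _ _ hjl).le
      refine Finset.mem_filter.2 ⟨Finset.mem_univ _, y, σ'.injective (le_antisymm ?_ ?_), rfl⟩
      · rwa [← hz]
      · rwa [← hx]
  rcases hσ J hJ with hcard | hcard
  · exact Finset.card_le_one.1 hcard _ (Finset.mem_filter.2 ⟨Finset.mem_univ _, s, rfl, rfl⟩) _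
      (Finset.mem_filter.2 ⟨Finset.mem_univ _, t, hst.symm, rfl⟩)
  exfalso
  have hall : ∀ j, ∃ x, c' x = c' s ∧ c x = j := by
    intro j
    have : J = Finset.univ := Finset.eq_univ_of_card _ (by simpa using hcard)
    exact (Finset.mem_filter.1 (this ▸ Finset.mem_univ j : j ∈ J)).2
  obtain ⟨s₀, hs₀⟩ : ∃ s₀, c' s₀ ≠ c' s := by
    have : Nontrivial (Fin m') := Fin.nontrivial_iff_two_le.2 hm'
    obtain ⟨i, hi⟩ := exists_ne (c' s)
    obtain ⟨s₀, rfl⟩ := h'.surj i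
    exact ⟨s₀, hi⟩
  have hK : IsPermInterval σ {c s₀}ᶜ := by
    rw [isPermInterval_iff]
    constructor
    · rintro i - l - j hij hjl
      rw [Finset.mem_compl, Finset.mem_singleton]
      rintro rfl
      obtain ⟨x, hx, rfl⟩ := hall i
      obtain ⟨z, hz, rfl⟩ := hall l
      have h₁ := h'.monotone (h.pos _ _ hij).le
      have h₂ := h'.monotone (h.pos _ _ hjl).le
      exact hs₀ (le_antisymm (by rwa [← hz]) (by rwa [← hx]))
    · rintro i - l - j hij hjl
      rw [Finset.mem_compl, Finset.mem_singleton]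
      rintro rfl
      obtain ⟨x, hx, rfl⟩ := hall i
      obtain ⟨z, hz, rfl⟩ := hall l
      have h₁ := h'.vmonotone (h.val _ _ hij).le
      have h₂ := h'.vmonotone (h.val _ _ hjl).le
      exact hs₀ (σ'.injective (le_antisymm (by rwa [← hz]) (by rwa [← hx])))
  have := hσ _ hK
  rw [Finset.card_compl, Finset.card_singleton, Fintype.card_fin] at this
  omega

theorem IsQuotient.le_of_eq_imp_eq (h : IsQuotient σ π c)
    (hc : ∀ s t, c' s = c' t → c s = c t) : m ≤ m' := by
  obtain ⟨g, hg⟩ := h.surj.hasRightInverse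
  have : Function.Injective fun i => c' (g i) := fun i j hij => by
    simpa [hg i, hg j] using hc _ _ hij
  simpa using Fintype.card_le_of_injective _ this

theorem IsQuotient.contains_of_eq_imp_eq (h : IsQuotient σ π c) (h' : IsQuotient σ' π c')
    (hc : ∀ s t, c' s = c' t → c s = c t) : Contains σ σ' := by
  obtain ⟨g, hg⟩ := h.surj.hasRightInverse
  refine contains_of_lt_imp_lt (fun i => c' (g i)) (fun i j hij => ?_) (fun i j hij => ?_)
  · refine lt_of_le_of_ne (h'.monotone (h.pos _ _ (by rwa [hg, hg])).le) fun heq => hij.ne ?_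
    simpa [hg i, hg j] using hc _ _ heq
  · refine lt_of_le_of_ne (h'.vmonotone (h.val _ _ (by rwa [hg, hg])).le) fun heq => hij.ne ?_
    simpa [hg i, hg j] using congrArg σ (hc _ _ (σ'.injective heq))

/-- Two quotient maps onto the same `Fin m` with comparable blocks coincide. -/
theorem IsQuotient.eq_of_eq_imp_eq {c' : Fin n → Fin m} {σ' : Perm m} (h : IsQuotient σ π c)
    (h' : IsQuotient σ' π c') (hc : ∀ s t, c' s = c' t → c s = c t) : c' = c := by
  obtain ⟨g, hg⟩ := h'.surj.hasRightInverse
  have key : ∀ s, c (g (c' s)) = c s := fun s => hc _ _ (hg _)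
  have hinj : Function.Injective fun i => c (g i) := by
    refine Finite.injective_iff_surjective.2 fun i => ?_
    obtain ⟨s, rfl⟩ := h.surj i
    exact ⟨c' s, key s⟩
  have hmono : StrictMono fun i => c (g i) := fun i j hij =>
    lt_of_le_of_ne (h.monotone (h'.pos _ _ (by rwa [hg, hg])).le) (hinj.ne hij.ne)
  funext s
  rw [← key s]
  exact (congrFun (Fin.strictMono_eq_id hmono) (c' s)).symm

/-- A permutation is the inflation of at most one simple permutation of length at least `2`. -/
theorem IsQuotient.simple_unique (h : IsQuotient σ π c) (h' : IsQuotient σ' π c')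
    (hσ : IsSimple σ) (hσ' : IsSimple σ') (hm : 2 ≤ m) (hm' : 2 ≤ m') :
    (⟨m, σ⟩ : SizedPerm) = ⟨m', σ'⟩ := by
  have key : ∀ {m m' : ℕ} {σ : Perm m} {σ' : Perm m'} {c : Fin n → Fin m} {c' : Fin n → Fin m'},
      IsQuotient σ π c → IsQuotient σ' π c' → IsSimple σ → IsSimple σ' → 3 ≤ m → 2 ≤ m' →
      (⟨m, σ⟩ : SizedPerm) = ⟨m', σ'⟩ := by
    intro m m' σ σ' c c' h h' hσ hσ' hm hm'
    have h₁ : ∀ s t, c' s = c' t → c s = c t := fun s t => h.eq_of_eq h' hσ hm hm'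
    have hle := h.le_of_eq_imp_eq h₁
    have h₂ : ∀ s t, c s = c t → c' s = c' t := fun s t =>
      h'.eq_of_eq h hσ' (hm.trans hle) (by omega)
    exact (h.contains_of_eq_imp_eq h' h₁).antisymm_of_size (h'.le_of_eq_imp_eq h₂)
  by_cases hm3 : 3 ≤ m
  · exact key h h' hσ hσ' hm3 hm'
  by_cases hm3' : 3 ≤ m'
  · exact (key h' h hσ' hσ hm3' hm).symm
  obtain rfl : m = 2 := by omega
  obtain rfl : m' = 2 := by omega
  obtain ⟨s, hs⟩ := h.surj 0
  obtain ⟨t, ht⟩ := h.surj 1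
  obtain ⟨s', hs'⟩ := h'.surj 0
  obtain ⟨t', ht'⟩ := h'.surj 1
  have hg : ∀ i, ∃ x, c x = i ∧ c' x = i := by
    intro i
    rcases Fin.eq_zero_or_eq_succ i with rfl | ⟨i, rfl⟩
    · refine ⟨min s s', le_antisymm ?_ (Fin.zero_le _), le_antisymm ?_ (Fin.zero_le _)⟩
      · exact hs ▸ h.monotone (min_le_left s s')
      · exact hs' ▸ h'.monotone (min_le_right s s')
    · obtain rfl := Subsingleton.elim i 0
      refine ⟨max t t', le_antisymm (Fin.le_last _) ?_, le_antisymm (Fin.le_last _) ?_⟩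
      · exact ht.symm.le.trans <| h.monotone (le_max_left t t')
      · exact ht'.symm.le.trans <| h'.monotone (le_max_right t t')
  choose g hg hg' using hg
  rw [perm_eq_of_lt_imp_lt (σ := σ) (π := σ') fun i j hij => ?_]
  refine lt_of_le_of_ne ?_ fun heq => hij.ne (congrArg σ (σ'.injective heq))
  rw [← hg' i, ← hg' j]
  apply h'.vmonotone
  exact (h.val _ _ (by rwa [hg, hg])).le

/-- `α` is an admissible family of blocks for `σ`: when `σ` has length `2`, its first block
is required not to be an inflation of `σ`. -/
def Admissible {m : ℕ} (σ : Perm m) (α : Fin m → SizedPerm) : Prop :=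
  ∀ i : Fin m, m = 2 → i.val = 0 → ¬ ∃ c, IsQuotient σ (α i).2 c

theorem IsInflation.blocks_unique {α α' : Fin m → SizedPerm} {f : ∀ i, Fin (α i).1 → Fin n}
    {f' : ∀ i, Fin (α' i).1 → Fin n} (h : IsInflation σ α π c f) (h' : IsInflation σ α' π c f') :
    α = α' := by
  have key : ∀ {α α' : Fin m → SizedPerm} {f : ∀ i, Fin (α i).1 → Fin n}
      {f' : ∀ i, Fin (α' i).1 → Fin n}, IsInflation σ α π c f → IsInflation σ α' π c f' →
      ∀ i, Contains (α i).2 (α' i).2 := by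
    intro α α' f f' h h' i
    obtain ⟨b', hb'⟩ := h'.exists_index i
    have hb : ∀ a, f' i (b' (f i a)) = f i a := fun a => hb' _ (h.color i a)
    refine contains_of_lt_imp_lt (fun a => b' (f i a)) (fun s t hst => ?_) fun s t hst => ?_
    · rw [← (h'.strictMono i).lt_iff_lt, hb, hb]
      exact h.mono i _ _ hst
    · rw [← lt_iff_lt_of_lt_imp_lt (α' i).2.injective (h'.vmono i), hb, hb]
      exact h.vmono i _ _ hst
  funext i
  exact (key h h' i).antisymm_of_size (key h' h i).le

theorem IsInflation.eq_zero_of_admissible {σ : Perm 2} {α : Fin 2 → SizedPerm} {c c' : Fin n → Fin 2}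
    {f : ∀ i, Fin (α i).1 → Fin n} (h : IsInflation σ α π c f) (hα : Admissible σ α)
    (h' : IsQuotient σ π c') {s : Fin n} (hs : c s = 0) : c' s = 0 := by
  by_contra hs'
  refine hα 0 rfl rfl ⟨fun a => c' (f 0 a), fun i => ?_, fun a b hab => ?_, fun a b hab => ?_⟩
  · obtain ⟨t, ht, ht'⟩ : ∃ t, c t = 0 ∧ c' t = i := by
      by_cases hi : i = 0
      · subst hi
        obtain ⟨t, ht⟩ := h'.surj 0
        have : t < s := h'.pos _ _ (by rw [ht]; exact Fin.pos_of_ne_zero hs')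
        exact ⟨t, le_antisymm (hs ▸ h.monotone this.le) (Fin.zero_le _), ht⟩
      · exact ⟨s, hs, by omega⟩
    obtain ⟨b, hb⟩ := h.exists_index 0
    exact ⟨b t, by rw [hb t ht, ht']⟩
  · rw [← (h.strictMono 0).lt_iff_lt]
    exact h'.pos _ _ hab
  · rw [← lt_iff_lt_of_lt_imp_lt (α 0).2.injective (h.vmono 0)]
    exact h'.val _ _ hab

/-- The blocks of the substitution decomposition are unique. -/
theorem Inflates.admissible_unique {α α' : Fin m → SizedPerm} (h : Inflates σ α π)
    (h' : Inflates σ α' π) (hσ : IsSimple σ) (hm : 2 ≤ m) (hα : Admissible σ α)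
    (hα' : Admissible σ α') : α = α' := by
  obtain ⟨c, f, h⟩ := h
  obtain ⟨c', f', h'⟩ := h'
  obtain rfl : c' = c := by
    by_cases hm3 : 3 ≤ m
    · exact h.toIsQuotient.eq_of_eq_imp_eq h'.toIsQuotient fun s t =>
        h.toIsQuotient.eq_of_eq h'.toIsQuotient hσ hm3 hm
    obtain rfl : m = 2 := by omega
    funext s
    have h₁ := h.eq_zero_of_admissible hα h'.toIsQuotient (s := s)
    have h₂ := h'.eq_zero_of_admissible hα' h.toIsQuotient (s := s)
    omega
  exact h.blocks_unique h'

end Uniqueness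

section Existence

/-- Every permutation of length at least `2` has a simple quotient of length at least `2`. -/
theorem exists_simple_quotient {n : ℕ} (π : Perm n) (hn : 2 ≤ n) :
    ∃ (m : ℕ) (σ : Perm m) (c : Fin n → Fin m), 2 ≤ m ∧ IsSimple σ ∧ IsQuotient σ π c := by
  classical
  let D : Set (Fin n → Fin n) := {d | (∀ s t, d s < d t → s < t) ∧
    (∀ s t, π (d s) < π (d t) → π s < π t) ∧ 2 ≤ (Set.range d).ncard}
  obtain ⟨d, ⟨hd₁, hd₂, hd₃⟩, hmin⟩ := Set.exists_min_image D (fun d => (Set.range d).ncard)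
    (Set.toFinite _) ⟨id, fun _ _ h => h, fun _ _ h => h, by simpa using hn⟩
  obtain ⟨m, hm⟩ : ∃ m, Nat.card (Set.range d) = m := ⟨_, rfl⟩
  obtain ⟨σ, e, he₁, he₂⟩ := exists_pattern (X := Set.range d) (p := Subtype.val)
    (v := fun s => π s) Subtype.val_injective (π.injective.comp Subtype.val_injective) hm
  have he₁' := lt_iff_lt_of_lt_imp_lt (p := fun a => a) Function.injective_id he₁
  have he₂' := lt_iff_lt_of_lt_imp_lt σ.injective he₂
  let c : Fin n → Fin m := fun s => e.symm ⟨d s, s, rfl⟩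
  have hc : ∀ s, (e (c s) : Fin n) = d s := fun s => by simp [c]
  have hq : IsQuotient σ π c := by
    refine ⟨fun i => ?_, fun s t hst => ?_, fun s t hst => ?_⟩
    · obtain ⟨s, hs⟩ := (e i).2
      refine ⟨s, e.injective (Subtype.ext ?_)⟩
      rw [hc, hs]
    · rw [← he₁', hc, hc] at hst
      exact hd₁ _ _ hst
    · rw [← he₂', hc, hc] at hst
      exact hd₂ _ _ hst
  refine ⟨m, σ, c, hm ▸ hd₃, fun I hI => ?_, hq⟩
  by_contra! hcard
  obtain ⟨i₀, hi₀, i₁, hi₁, hne⟩ := Finset.one_lt_card.1 hcard.1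
  obtain ⟨j, hj⟩ : ∃ j, j ∉ I := by
    by_contra! hall
    exact hcard.2 (by rw [Finset.eq_univ_iff_forall.2 hall, Finset.card_univ, Fintype.card_fin])
  let r : Fin m → Fin m := fun i =>
    if i ∈ I then i₀ else i
  have hr : ∀ q : Perm m,
      (∀ i ∈ I, ∀ l ∈ I, ∀ j, q i < q j → q j < q l → j ∈ I) →
      ∀ i k, q (r i) < q (r k) → q i < q k := by
    intro q hqI i k hik
    by_contra hn
    rcases (not_lt.1 hn).lt_or_eq with hlt | heq
    · by_cases hi : i ∈ I
      · by_cases hk : k ∈ I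
        · simp only [r, hi, hk, if_true] at hik
          exact lt_irrefl _ hik
        · simp only [r, hi, hk, if_true, if_false] at hik
          exact hk (hqI _ hi₀ _ hi _ hik hlt)
      · by_cases hk : k ∈ I
        · simp only [r, hi, hk, if_true, if_false] at hik
          exact hi (hqI _ hk _ hi₀ _ hlt hik)
        · simp only [r, hi, hk, if_false] at hik
          exact lt_asymm hik hlt
    · rw [q.injective heq] at hik
      exact lt_irrefl _ hik
  rw [isPermInterval_iff] at hI
  have hsub : Set.range (fun s => (e (r (c s)) : Fin n)) ⊂ Set.range d := by
    refine ⟨?_, fun hsub => ?_⟩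
    · rintro _ ⟨s, rfl⟩
      exact (e (r (c s))).2
    · obtain ⟨s, hs⟩ := hsub (e i₁).2
      have := e.injective (Subtype.ext hs)
      simp only [r] at this
      split_ifs at this with hs
      · exact hne this
      · exact hs (this ▸ hi₁)
  refine (Set.ncard_lt_ncard hsub).not_ge (hmin _ ⟨fun s t hst => ?_, fun s t hst => ?_, ?_⟩)
  · rw [he₁'] at hst
    exact hq.pos _ _ (hr 1 hI.1 _ _ hst)
  · rw [he₂'] at hst
    exact hq.val _ _ (hr σ hI.2 _ _ hst)
  · obtain ⟨s, hs⟩ := hq.surj i₀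
    obtain ⟨t, ht⟩ := hq.surj j
    refine (Set.one_lt_ncard (Set.toFinite _)).2 ⟨_, ⟨s, rfl⟩, _, ⟨t, rfl⟩, fun heq => hj ?_⟩
    have := e.injective (Subtype.ext heq)
    simp only [r, hs, ht, hi₀, hj, if_true, if_false] at this
    exact this ▸ hi₀

/-- The substitution decomposition of a permutation of length at least `2`. -/
theorem exists_admissible_inflates {n : ℕ} (π : Perm n) (hn : 2 ≤ n) :
    ∃ (m : ℕ) (σ : Perm m) (α : Fin m → SizedPerm), 2 ≤ m ∧ IsSimple σ ∧ Inflates σ α π ∧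
      Admissible σ α := by
  obtain ⟨m, σ, c₀, hm, hσ, hc₀⟩ := exists_simple_quotient π hn
  obtain ⟨c, hc, hmin⟩ := Set.exists_min_image {c | IsQuotient σ π c}
    (fun c => {s | (c s).val = 0}.ncard) (Set.toFinite _) ⟨c₀, hc₀⟩
  obtain ⟨α, f, h⟩ := hc.exists_isInflation
  refine ⟨m, σ, α, hm, hσ, ⟨c, f, h⟩, ?_⟩
  rintro i rfl hi ⟨c₁, hc₁⟩
  obtain rfl : i = 0 := Fin.ext hi
  obtain ⟨b, hb⟩ := h.exists_index 0
  have hbf : ∀ a, b (f 0 a) = a := fun a =>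
    (h.strictMono 0).injective (hb _ (h.color 0 a))
  let c' : Fin n → Fin 2 := fun s => if c s = 0 then c₁ (b s) else c s
  have h₀ : ∀ s, c s = 0 → c' s = c₁ (b s) := fun s hs => if_pos hs
  have h₁ : ∀ s, c s ≠ 0 → c' s = 1 := fun s hs => (if_neg hs).trans (by omega)
  have hle : ∀ s, c s ≤ c' s := by
    intro s
    by_cases hs : c s = 0
    · rw [hs]
      exact Fin.zero_le _
    · rw [h₁ s hs]
      omega
  have hsub : {s | (c' s).val = 0} ⊂ {s | (c s).val = 0} := by
    refine ⟨fun s hs => ?_, fun hsub => ?_⟩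
    · have := hle s
      change (c' s).val = 0 at hs
      change (c s).val = 0
      omega
    · obtain ⟨a, ha⟩ := hc₁.surj 1
      have : (c' (f 0 a)).val = 0 := hsub (by simp [h.color])
      rw [h₀ _ (h.color 0 a), hbf, ha] at this
      exact absurd this one_ne_zero
  refine (Set.ncard_lt_ncard hsub).not_ge (hmin c' ⟨fun i => ?_, fun s t hst => ?_,
    fun s t hst => ?_⟩)
  · obtain ⟨a, rfl⟩ := hc₁.surj i
    exact ⟨f 0 a, by rw [h₀ _ (h.color 0 a), hbf]⟩
  · by_cases ht : c t = 0
    · by_cases hs : c s = 0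
      · rw [h₀ s hs, h₀ t ht] at hst
        have := h.mono 0 _ _ (hc₁.pos _ _ hst)
        rwa [hb s hs, hb t ht] at this
      · rw [h₁ s hs] at hst
        omega
    · have := h₁ t ht
      by_cases hs : c s = 0
      · exact hc.pos _ _ (by omega)
      · rw [h₁ s hs, this] at hst
        exact absurd hst (lt_irrefl _)
  · by_cases hs : c s = 0
    · by_cases ht : c t = 0
      · rw [h₀ s hs, h₀ t ht] at hst
        have := h.vmono 0 _ _ (hc₁.val _ _ hst)
        rwa [hb s hs, hb t ht] at this
      · have hne : c' s ≠ c' t := fun heq => hst.ne (congrArg σ heq)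
        have := h₁ t ht
        have hs' : c' s = c s := by omega
        have ht' : c' t = c t := by omega
        exact hc.val _ _ (by rwa [← hs', ← ht'])
    · have hne : c' s ≠ c' t := fun heq => hst.ne (congrArg σ heq)
      have := h₁ s hs
      have := hle t
      have hs' : c' s = c s := by omega
      have ht' : c' t = c t := by omega
      exact hc.val _ _ (by rwa [← hs', ← ht'])

end Existence
theorem derivation_aeval {R A M T : Type*} [CommRing R] [CommRing A] [Algebra R A]
    [AddCommGroup M] [Module A M] [Module R M] [Fintype T]
    (D : Derivation R A M) (g : T → A) (p : MvPolynomial T R) :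
    D (MvPolynomial.aeval g p) =
      ∑ u, MvPolynomial.aeval g (MvPolynomial.pderiv u p) • D (g u) := by
  classical
  induction p using MvPolynomial.induction_on with
  | C a => simp
  | add p q hp hq => simp [hp, hq, add_smul, Finset.sum_add_distrib]
  | mul_X p v hp =>
    simp only [map_mul, MvPolynomial.aeval_X, Derivation.leibniz, hp, MvPolynomial.pderiv_X,
      Finset.smul_sum, smul_eq_mul, map_add, add_smul, Finset.sum_add_distrib, mul_smul]
    congr 1
    rw [Finset.sum_eq_single v]
    · simp
    · intro b _ hb
      simp [hb.symm]
    · simp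

/-- The Jacobian criterion for algebraicity of the solutions of a square polynomial system. -/
theorem isAlgebraic_of_jacobian_ne_zero {K L T : Type*} [Field K] [Field L] [Algebra K L]
    [Fintype T] [DecidableEq T] (g : T → L) (P : T → MvPolynomial T K)
    (hP : ∀ t, MvPolynomial.aeval g (P t) = 0)
    (hJ : (Matrix.of fun t u => MvPolynomial.aeval g (MvPolynomial.pderiv u (P t))).det ≠ 0)
    (t : T) : IsAlgebraic K (g t) := by
  let E := IntermediateField.adjoin K (Set.range g)
  let g' : T → E := fun u => ⟨g u, IntermediateField.subset_adjoin K _ ⟨u, rfl⟩⟩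
  have hg' (p : MvPolynomial T K) :
      algebraMap E L (MvPolynomial.aeval g' p) = MvPolynomial.aeval g p := by
    rw [← MvPolynomial.aeval_algebraMap_apply]
    rfl
  let J : Matrix T T E :=
    Matrix.of fun t u => MvPolynomial.aeval g' (MvPolynomial.pderiv u (P t))
  have hJ' : J.det ≠ 0 := by
    intro h
    apply hJ
    have := congrArg (algebraMap E L) h
    rw [RingHom.map_det, map_zero] at this
    rw [← this]
    congr 1
    ext t u
    simp only [Matrix.of_apply, RingHom.mapMatrix_apply, Matrix.map_apply, J]
    exact (hg' _).symm
  have hD (u : T) : KaehlerDifferential.D K E (g' u) = 0 := by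
    have h0 (t : T) : ∑ u, J t u • KaehlerDifferential.D K E (g' u) = 0 := by
      have h1 : MvPolynomial.aeval g' (P t) = 0 :=
        (algebraMap E L).injective (by rw [hg', hP, map_zero])
      rw [← map_zero (KaehlerDifferential.D K E), ← h1, derivation_aeval]
      rfl
    have h1 : ∑ t, J⁻¹ u t • ∑ v, J t v • KaehlerDifferential.D K E (g' v) = 0 := by
      simp [h0]
    simp_rw [Finset.smul_sum, smul_smul] at h1
    rw [Finset.sum_comm] at h1
    simp_rw [← Finset.sum_smul, ← Matrix.mul_apply] at h1
    rw [Matrix.nonsing_inv_mul _ (isUnit_iff_ne_zero.mpr hJ')] at h1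
    simpa [Matrix.one_apply, ite_smul] using h1
  have hD0 (x : L) (hx : x ∈ E) : KaehlerDifferential.D K E ⟨x, hx⟩ = 0 := by
    induction hx using IntermediateField.adjoin_induction with
    | mem x hx =>
      obtain ⟨u, rfl⟩ := hx
      exact hD u
    | algebraMap x => exact (KaehlerDifferential.D K E).map_algebraMap x
    | add x y hx hy hx' hy' =>
      have := (KaehlerDifferential.D K E).map_add ⟨x, hx⟩ ⟨y, hy⟩
      rw [hx', hy', add_zero] at this
      exact this
    | inv x hx hx' =>
      have := (KaehlerDifferential.D K E).leibniz_inv ⟨x, hx⟩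
      rw [hx', smul_zero] at this
      exact this
    | mul x y hx hy hx' hy' =>
      have := (KaehlerDifferential.D K E).leibniz ⟨x, hx⟩ ⟨y, hy⟩
      rw [hx', hy', smul_zero, smul_zero, add_zero] at this
      exact this
  have hsub : Subsingleton (KaehlerDifferential K E) := by
    rw [← Submodule.subsingleton_iff E, ← subsingleton_iff_bot_eq_top,
      ← KaehlerDifferential.span_range_derivation, eq_comm, Submodule.span_eq_bot]
    rintro _ ⟨x, rfl⟩
    exact hD0 x.1 x.2
  have : Algebra.EssFiniteType K E :=
    IntermediateField.essFiniteType_iff.mpr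
      (IntermediateField.fg_adjoin_of_finite (Set.finite_range g))
  have : Algebra.FormallyUnramified K E := ⟨hsub⟩
  have : Algebra.IsSeparable K E := Algebra.FormallyUnramified.isSeparable K E
  have : Algebra.IsAlgebraic K E := inferInstance
  exact (Algebra.IsAlgebraic.isAlgebraic (g' t)).algebraMap (A := L)

/-- A power series solution of a square polynomial system over `ℚ[X]` whose Jacobian
vanishes at the origin is algebraic. -/
theorem isAlgebraic_of_eq_aeval {T : Type*} [Fintype T] (f : T → PowerSeries ℚ)
    (Q : T → MvPolynomial T (Polynomial ℚ)) (hQ : ∀ t, f t = MvPolynomial.aeval f (Q t))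
    (hJ : ∀ t u, PowerSeries.constantCoeff
      (MvPolynomial.aeval f (MvPolynomial.pderiv u (Q t))) = 0) (t : T) :
    IsAlgebraic (Polynomial ℚ) (f t) := by
  classical
  let A := Polynomial ℚ
  let B := PowerSeries ℚ
  let K := FractionRing A
  let L := FractionRing B
  have hinjAB : Function.Injective (algebraMap A B) := Polynomial.coe_injective ℚ
  have hinjBL : Function.Injective (algebraMap B L) := IsFractionRing.injective B L
  have : FaithfulSMul A L := by
    rw [faithfulSMul_iff_algebraMap_injective, IsScalarTower.algebraMap_eq A B L]
    exact hinjBL.comp hinjAB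
  let : Algebra K L := FractionRing.liftAlgebra A L
  have : IsScalarTower A K L := FractionRing.isScalarTower_liftAlgebra A L
  rw [← isAlgebraic_algebraMap_iff (R := A) (S := B) (A := L) hinjBL,
    IsFractionRing.isAlgebraic_iff A K L]
  let g : T → L := fun t => algebraMap B L (f t)
  let P : T → MvPolynomial T A := fun t => MvPolynomial.X t - Q t
  have hg (p : MvPolynomial T A) : MvPolynomial.aeval g (MvPolynomial.map (algebraMap A K) p) =
      algebraMap B L (MvPolynomial.aeval f p) := by
    rw [MvPolynomial.aeval_map_algebraMap, ← MvPolynomial.aeval_algebraMap_apply]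
    rfl
  refine isAlgebraic_of_jacobian_ne_zero g (fun t => MvPolynomial.map (algebraMap A K) (P t))
    (fun t => ?_) ?_ t
  · have : MvPolynomial.aeval f (P t) = 0 := by simp [P, ← hQ]
    rw [hg, this, map_zero]
  · have : (Matrix.of fun t u => MvPolynomial.aeval g (MvPolynomial.pderiv u
        (MvPolynomial.map (algebraMap A K) (P t)))) =
        (algebraMap B L).mapMatrix (Matrix.of fun t u =>
          MvPolynomial.aeval f (MvPolynomial.pderiv u (P t))) := by
      ext t u
      simp only [Matrix.of_apply, RingHom.mapMatrix_apply, Matrix.map_apply,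
        MvPolynomial.pderiv_map, hg]
    rw [this, ← RingHom.map_det]
    refine fun h => one_ne_zero (α := ℚ) ?_
    rw [map_eq_zero_iff _ hinjBL] at h
    have h' := congrArg PowerSeries.constantCoeff h
    rw [RingHom.map_det, map_zero] at h'
    rw [← h', ← Matrix.det_one (n := T)]
    congr 1
    ext t u
    simp [P, hJ, Matrix.one_apply, MvPolynomial.pderiv_X, Pi.single_apply, apply_ite]

theorem isAlgebraicOverQx_iff (f : PowerSeries ℚ) :
    IsAlgebraicOverQx f ↔ IsAlgebraic (Polynomial ℚ) f := by
  have : algebraMap (Polynomial ℚ) (PowerSeries ℚ) = Polynomial.coeToPowerSeries.ringHom := by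
    ext <;> simp [PowerSeries.algebraMap_apply']
  simp only [IsAlgebraicOverQx, IsAlgebraic, Polynomial.aeval_def, this]

/-- The generating function of a type `X` graded by `size`. -/
noncomputable def sizeGenFun {X : Type*} (size : X → ℕ) : PowerSeries ℚ :=
  PowerSeries.mk fun n => (Nat.card {x // size x = n} : ℚ)

theorem sizeGenFun_congr {X Y : Type*} {size : X → ℕ} {size' : Y → ℕ} (e : X ≃ Y)
    (h : ∀ x, size' (e x) = size x) : sizeGenFun size = sizeGenFun size' := by
  ext n
  simp only [sizeGenFun, PowerSeries.coeff_mk]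
  exact congrArg _ (Nat.card_congr (e.subtypeEquiv fun x => by rw [h]))

theorem sizeGenFun_sigma {ι : Type*} [Fintype ι] {X : ι → Type*} (size : ∀ i, X i → ℕ)
    (hfin : ∀ i n, Finite {x // size i x = n}) :
    sizeGenFun (fun x : Σ i, X i => size x.1 x.2) = ∑ i, sizeGenFun (size i) := by
  ext n
  simp only [sizeGenFun, PowerSeries.coeff_mk, map_sum]
  rw [← Nat.cast_sum, ← Nat.card_sigma]
  refine congrArg _ (Nat.card_congr ⟨fun x => ⟨x.1.1, x.1.2, x.2⟩,
    fun x => ⟨⟨x.1, x.2.1⟩, x.2.2⟩, fun _ => rfl, fun _ => rfl⟩)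

theorem sizeGenFun_sum {X Y : Type*} (size : X → ℕ) (size' : Y → ℕ)
    (hX : ∀ n, Finite {x // size x = n}) (hY : ∀ n, Finite {y // size' y = n}) :
    sizeGenFun (Sum.elim size size') = sizeGenFun size + sizeGenFun size' := by
  ext n
  simp only [sizeGenFun, PowerSeries.coeff_mk, map_add]
  have := hX n
  have := hY n
  rw [← Nat.cast_add, ← Nat.card_sum]
  exact congrArg _ (Nat.card_congr (Equiv.subtypeSum (p := fun x => Sum.elim size size' x = n)))

theorem sizeGenFun_pi {ι : Type*} [Fintype ι] {X : ι → Type*} (size : ∀ i, X i → ℕ)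
    (hfin : ∀ i n, Finite {x // size i x = n}) :
    sizeGenFun (fun x : ∀ i, X i => ∑ i, size i (x i)) = ∏ i, sizeGenFun (size i) := by
  classical
  ext n
  rw [PowerSeries.coeff_prod]
  simp only [sizeGenFun, PowerSeries.coeff_mk]
  simp_rw [← Nat.cast_prod, ← Nat.card_pi]
  rw [← Nat.cast_sum, ← Finset.sum_coe_sort, ← Nat.card_sigma]
  refine congrArg _ (Nat.card_congr ⟨
    fun x => ⟨⟨Finsupp.equivFunOnFinite.symm fun i => size i (x.1 i), ?_⟩,
      fun i => ⟨x.1 i, rfl⟩⟩,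
    fun x => ⟨fun i => (x.2 i).1, ?_⟩, fun _ => rfl, ?_⟩)
  · simp [x.2]
  · have h := Finset.mem_finsuppAntidiag.mp x.1.2
    exact (Finset.sum_congr rfl fun i _ => (x.2 i).2).trans h.1
  · rintro ⟨⟨l, hl⟩, x⟩
    obtain ⟨y, hy, rfl⟩ : ∃ (y : ∀ i, X i) (hy : ∀ i, size i (y i) = l i),
        x = fun i => ⟨y i, hy i⟩ := ⟨fun i => (x i).1, fun i => (x i).2, rfl⟩
    obtain rfl : l = Finsupp.equivFunOnFinite.symm fun i => size i (y i) :=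
      Finsupp.ext fun i => (hy i).symm
    rfl

/-- The trees-with-types principle: if every object of size at least two decomposes uniquely
by one of finitely many operations of arity at least two, and the type of the result depends
only on the operation and the types of the arguments, then with finitely many types the
generating function of the objects of each type is algebraic. -/
theorem isAlgebraic_sizeGenFun_of_decomposition {P T S : Type*} [Finite T] [Finite S]
    (size : P → ℕ) (τ : P → T) (arity : S → ℕ) (R : ∀ s, (Fin (arity s) → P) → P → Prop)
    (hfin : ∀ n, Finite {p // size p = n}) (hpos : ∀ p, 0 < size p)
    (harity : ∀ s, 2 ≤ arity s)
    (hsize : ∀ {s α p}, R s α p → size p = ∑ i, size (α i))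
    (hfun : ∀ {s α p p'}, R s α p → R s α p' → p = p')
    (hcongr : ∀ {s α p} (α' : Fin (arity s) → P), R s α p → (∀ i, τ (α i) = τ (α' i)) →
      ∃ p', R s α' p' ∧ τ p' = τ p)
    (hdec : ∀ p, 2 ≤ size p → ∃ s α, R s α p)
    (huniq : ∀ {s α s' α' p}, R s α p → R s' α' p →
      (⟨s, α⟩ : Σ s, Fin (arity s) → P) = ⟨s', α'⟩) (t : T) :
    IsAlgebraic (Polynomial ℚ) (sizeGenFun fun p : {p // τ p = t} => size p.1) := by
  classical
  have := Fintype.ofFinite T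
  have := Fintype.ofFinite S
  let f : T → PowerSeries ℚ := fun t => sizeGenFun fun p : {p // τ p = t} => size p.1
  let G : T → Type _ := fun t =>
    {q : Σ s, Fin (arity s) → T // ∃ α p, (∀ i, τ (α i) = q.2 i) ∧ R q.1 α p ∧ τ p = t}
  let c : T → ℕ := fun t => Nat.card {p : P // τ p = t ∧ size p = 1}
  let Q : T → MvPolynomial T (Polynomial ℚ) := fun t =>
    MvPolynomial.C (Polynomial.C (c t : ℚ) * Polynomial.X) +
      ∑ q : G t, ∏ i, MvPolynomial.X (q.1.2 i)
  have hsub (q : P → Prop) (n : ℕ) : Finite {x : {p // q p} // size x.1 = n} :=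
    Finite.of_injective (β := {p // size p = n}) (fun x => ⟨x.1.1, x.2⟩) fun x y h =>
      Subtype.ext (Subtype.ext (congrArg (fun z : {p // size p = n} => z.1) h))
  have hf0 (t : T) : PowerSeries.constantCoeff (f t) = 0 := by
    rw [← PowerSeries.coeff_zero_eq_constantCoeff_apply]
    simp only [f, sizeGenFun, PowerSeries.coeff_mk, Nat.cast_eq_zero]
    have : IsEmpty {x : {p // τ p = t} // size x.1 = 0} := ⟨fun x => (hpos x.1.1).ne' x.2⟩
    exact Nat.card_of_isEmpty
  refine isAlgebraic_of_eq_aeval f Q (fun t => ?_) (fun t u => ?_) t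
  · have h1 : f t = sizeGenFun (fun p : {p // τ p = t ∧ size p = 1} => size p.1) +
        sizeGenFun (fun p : {p // τ p = t ∧ 2 ≤ size p} => size p.1) := by
      rw [← sizeGenFun_sum _ _ (hsub _) (hsub _)]
      symm
      refine sizeGenFun_congr (Equiv.ofBijective
        (Sum.elim (fun p => ⟨p.1, p.2.1⟩) (fun p => ⟨p.1, p.2.1⟩)) ⟨?_, ?_⟩) ?_
      · rintro (x | x) (y | y) h <;> have h := congrArg Subtype.val h <;>
          dsimp at h <;> have := x.2.2 <;> have := y.2.2
        · rw [Subtype.ext h]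
        · rw [← h] at this; lia
        · rw [← h] at this; lia
        · rw [Subtype.ext h]
      · rintro ⟨p, hp⟩
        by_cases h : 2 ≤ size p
        · exact ⟨Sum.inr ⟨p, hp, h⟩, rfl⟩
        · exact ⟨Sum.inl ⟨p, hp, by have := hpos p; lia⟩, rfl⟩
      · rintro (x | x) <;> rfl
    have h2 : sizeGenFun (fun p : {p // τ p = t ∧ size p = 1} => size p.1) =
        algebraMap (Polynomial ℚ) (PowerSeries ℚ)
          (Polynomial.C (c t : ℚ) * Polynomial.X) := by
      ext n
      rw [PowerSeries.algebraMap_apply', Algebra.algebraMap_self, PowerSeries.map_id,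
        id, Polynomial.coeff_coe, Polynomial.coeff_C_mul, Polynomial.coeff_X]
      simp only [sizeGenFun, PowerSeries.coeff_mk, mul_ite, mul_one, mul_zero]
      split_ifs with hn
      · subst hn
        exact congrArg _ (Nat.card_congr (Equiv.subtypeUnivEquiv fun p => p.2.2))
      · rw [Nat.cast_eq_zero]
        have : IsEmpty {x : {p // τ p = t ∧ size p = 1} // size x.1 = n} :=
          ⟨fun x => hn (x.1.2.2.symm.trans x.2)⟩
        exact Nat.card_of_isEmpty
    have h3 : sizeGenFun (fun p : {p // τ p = t ∧ 2 ≤ size p} => size p.1) =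
        ∑ q : G t, ∏ i, f (q.1.2 i) := by
      have hex (q : G t) (x : ∀ i, {p // τ p = q.1.2 i}) :
          ∃ p, R q.1.1 (fun i => (x i).1) p ∧ τ p = t := by
        obtain ⟨α, p, h, hR, hp⟩ := q.2
        obtain ⟨p', hp', h'⟩ := hcongr (fun i => (x i).1) hR fun i => (h i).trans (x i).2.symm
        exact ⟨p', hp', h'.trans hp⟩
      choose F hFR hFt using hex
      have htwo {s α p} (h : R s α p) : 2 ≤ size p := by
        rw [hsize h]
        calc 2 ≤ arity s := harity s
          _ = ∑ i : Fin (arity s), 1 := by simp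
          _ ≤ _ := Finset.sum_le_sum fun i _ => hpos _
      simp only [f]
      simp_rw [← sizeGenFun_pi _ fun i => hsub _]
      rw [← sizeGenFun_sigma]
      · symm
        refine sizeGenFun_congr (Equiv.ofBijective
          (fun x => ⟨F x.1 x.2, hFt _ _, htwo (hFR _ _)⟩) ⟨?_, ?_⟩) ?_
        · rintro ⟨⟨⟨s, u⟩, hq⟩, x⟩ ⟨⟨⟨s', u'⟩, hq'⟩, x'⟩ h
          have h := congrArg Subtype.val h
          dsimp only at h
          have h1 := hFR ⟨⟨s, u⟩, hq⟩ x
          have h2 := hFR ⟨⟨s', u'⟩, hq'⟩ x'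
          rw [h] at h1
          have h3 := huniq h1 h2
          obtain rfl : s = s' := congrArg Sigma.fst h3
          have h3 := sigma_mk_injective h3
          obtain rfl : u = u' := by
            ext i
            exact (x i).2.symm.trans ((congrArg τ (congrFun h3 i)).trans (x' i).2)
          obtain rfl : x = x' := by
            ext i
            exact congrFun h3 i
          rfl
        · rintro ⟨p, hp, h2⟩
          obtain ⟨s, α, hR⟩ := hdec p h2
          refine ⟨⟨⟨⟨s, fun i => τ (α i)⟩, α, p, fun _ => rfl, hR, hp⟩,
            fun i => ⟨α i, rfl⟩⟩, ?_⟩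
          exact Subtype.ext (hfun (hFR _ _) hR)
        · rintro ⟨q, x⟩
          exact hsize (hFR q x)
      · intro q n
        let e : {x : ∀ i, {p // τ p = q.1.2 i} // ∑ i, size (x i).1 = n} →
            ∀ i : Fin (arity q.1.1), Σ k : Fin (n + 1), {p // size p = k.1} := fun x i =>
          ⟨⟨size (x.1 i).1, Nat.lt_succ_of_le ((Finset.single_le_sum (f := fun i => size (x.1 i).1)
              (fun _ _ => Nat.zero_le _) (Finset.mem_univ i)).trans_eq x.2)⟩, (x.1 i).1, rfl⟩
        refine Finite.of_injective e fun x y h => ?_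
        ext i
        have := congrFun h i
        exact congrArg (fun z : Σ k : Fin (n + 1), {p // size p = k.1} => z.2.1) this
    rw [h1, h2, h3]
    simp [Q, map_sum, map_prod]
  · have hprod (m : ℕ) (hm : 2 ≤ m) (v : Fin m → T) :
        PowerSeries.constantCoeff (MvPolynomial.aeval f (MvPolynomial.pderiv u
          (∏ i, MvPolynomial.X (R := Polynomial ℚ) (v i)))) = 0 := by
      obtain ⟨k, rfl⟩ := Nat.exists_eq_add_of_le' hm
      rw [Fin.prod_univ_succ, Fin.prod_univ_succ]
      simp [Derivation.leibniz, hf0]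
    simp only [Q, map_add, MvPolynomial.pderiv_C, zero_add, map_sum]
    exact Finset.sum_eq_zero fun q _ => hprod _ (harity _) _

theorem IsInflation.block_size_lt {m n : ℕ} {σ : Perm m} {α : Fin m → SizedPerm} {π : Perm n}
    {c : Fin n → Fin m} {f : ∀ i, Fin (α i).1 → Fin n} (h : IsInflation σ α π c f) (hm : 2 ≤ m)
    (i : Fin m) : (α i).1 < n := by
  have : Nontrivial (Fin m) := Fin.nontrivial_iff_two_le.mpr hm
  obtain ⟨j, hj⟩ := exists_ne i
  conv_rhs => rw [h.size_eq]
  exact Finset.single_lt_sum (f := fun i => (α i).1) hj (Finset.mem_univ i) (Finset.mem_univ j) (h.size_pos j)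
    fun _ _ _ => Nat.zero_le _

/-- The containment order on permutations of arbitrary sizes. -/
def SizedPerm.Contained (p q : SizedPerm) : Prop := Contains p.2 q.2

instance : IsPreorder SizedPerm SizedPerm.Contained where
  refl p := Contains.refl p.2
  trans _ _ _ h h' := Contains.trans h h'

/-- The nonempty permutations of `C`. -/
def nonemptyPerms (C : ∀ n, Set (Perm n)) : Set SizedPerm := {p | p.2 ∈ C p.1 ∧ 0 < p.1}

/-- The simple permutations of `C` of size at least two. -/
def simplePerms (C : ∀ n, Set (Perm n)) : Set SizedPerm :=
  {p | p.2 ∈ C p.1 ∧ IsSimple p.2 ∧ 2 ≤ p.1}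

/-- The inflations of elements of `S` by elements of `B`. -/
def inflations (S B : Set SizedPerm) : Set SizedPerm :=
  {p | ∃ s ∈ S, ∃ α : Fin s.1 → SizedPerm, (∀ i, α i ∈ B) ∧ Inflates s.2 α p.2}

theorem exists_decomposition {C : ∀ n, Set (Perm n)} (hC : IsPermClass C) {p : SizedPerm}
    (hp : p.2 ∈ C p.1) (h2 : 2 ≤ p.1) :
    ∃ s ∈ simplePerms C, ∃ α : Fin s.1 → SizedPerm, (∀ i, α i ∈ nonemptyPerms C) ∧
      Inflates s.2 α p.2 ∧ Admissible s.2 α := by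
  obtain ⟨m, σ, α, hm, hσ, ⟨c, f, h⟩, hα⟩ := exists_admissible_inflates p.2 h2
  exact ⟨⟨m, σ⟩, ⟨hC _ _ hp h.toIsQuotient.contains, hσ, hm⟩, α,
    fun i => ⟨hC _ _ hp (h.block_contains i), h.size_pos i⟩, ⟨c, f, h⟩, hα⟩

theorem partiallyWellOrderedOn_inflations {S B : Set SizedPerm} (hS : S.Finite)
    (hB : B.PartiallyWellOrderedOn SizedPerm.Contained) :
    (inflations S B).PartiallyWellOrderedOn SizedPerm.Contained := by
  have h1 (s : SizedPerm) : {p : SizedPerm | ∃ α : Fin s.1 → SizedPerm, (∀ i, α i ∈ B) ∧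
      Inflates s.2 α p.2}.PartiallyWellOrderedOn SizedPerm.Contained := by
    rw [Set.partiallyWellOrderedOn_iff_exists_lt]
    intro f hf
    choose α hα hf using hf
    obtain ⟨m, n, hmn, h⟩ := (Set.PartiallyWellOrderedOn.pi fun _ : Fin s.1 => hB).exists_lt
      (f := α) fun n i _ => hα n i
    exact ⟨m, n, hmn, (hf m).contains (hf n) h⟩
  refine ((Finset.partiallyWellOrderedOn_bUnion hS.toFinset).mpr fun s _ => h1 s).mono ?_
  rintro p ⟨s, hs, h⟩
  exact Set.mem_biUnion (hS.mem_toFinset.mpr hs) h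

/-- A class with finitely many simple permutations is well-quasi-ordered by containment. -/
theorem partiallyWellOrderedOn_nonemptyPerms {C : ∀ n, Set (Perm n)} (hC : IsPermClass C)
    (hfin : (simplePerms C).Finite) :
    (nonemptyPerms C).PartiallyWellOrderedOn SizedPerm.Contained := by
  rw [Set.PartiallyWellOrderedOn.iff_not_exists_isMinBadSeq fun p => p.1]
  rintro ⟨g, ⟨hgC, hbad⟩, hmin⟩
  have h2 (k : ℕ) : 2 ≤ (g k).1 := by
    by_contra hk
    refine hbad k (k + 1) k.lt_succ_self ?_
    have hk0 := (hgC k).2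
    have : Subsingleton (Fin (g k).1) := Fin.subsingleton_iff_le_one.mpr (by lia)
    exact contains_of_lt_imp_lt (fun _ => ⟨0, (hgC (k + 1)).2⟩)
      (fun s t hst => absurd (Subsingleton.elim s t) hst.ne)
      (fun s t hst => absurd (Subsingleton.elim _ _) hst.ne)
  choose s hs α hα hinf hadm using fun k => exists_decomposition hC (hgC k).1 (h2 k)
  let B : Set SizedPerm := {q | ∃ k i, q = α k i}
  have hsmall (k : ℕ) (i : Fin (s k).1) : (α k i).1 < (g k).1 := by
    obtain ⟨c, f, h⟩ := hinf k
    exact h.block_size_lt (hs k).2.2 i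
  have hcont (k : ℕ) (i : Fin (s k).1) : SizedPerm.Contained (α k i) (g k) := by
    obtain ⟨c, f, h⟩ := hinf k
    exact h.block_contains i
  have hB : B.PartiallyWellOrderedOn SizedPerm.Contained := by
    rw [Set.partiallyWellOrderedOn_iff_exists_lt]
    intro h hh
    choose φ i hφ using hh
    obtain ⟨j, hj⟩ : ∃ j, ∀ l, φ j ≤ φ l := by
      obtain ⟨j, -, hj⟩ := WellFounded.has_min (wellFounded_lt.onFun (f := φ)) Set.univ
        ⟨0, trivial⟩
      exact ⟨j, fun l => not_lt.mp (hj l trivial)⟩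
    let g' : ℕ → SizedPerm := fun k => if k < φ j then g k else h (j + (k - φ j))
    have hg' := hmin (φ j) g' (fun k hk => (if_pos hk).symm) (by
      simp only [g', lt_irrefl, if_false, Nat.sub_self, Nat.add_zero]
      rw [hφ]
      exact hsmall _ _)
    simp only [Set.PartiallyWellOrderedOn.IsBadSeq, not_and, not_forall, not_not] at hg'
    obtain ⟨m, n, hmn, hr⟩ := hg' fun k => by
      simp only [g']
      split_ifs
      · exact hgC k
      · rw [hφ]
        exact hα _ _
    simp only [g'] at hr
    split_ifs at hr with h1 h2 h2
    · exact absurd hr (hbad m n hmn)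
    · refine absurd ?_ (hbad m (φ (j + (n - φ j))) (h1.trans_le (hj _)))
      rw [hφ (j + (n - φ j))] at hr
      exact Contains.trans hr (hcont _ _)
    · lia
    · exact ⟨_, _, by lia, hr⟩
  obtain ⟨m, n, hmn, h⟩ := (partiallyWellOrderedOn_inflations hfin hB).exists_lt (f := g)
    fun k => ⟨s k, hs k, α k, fun i => ⟨k, i, rfl⟩, hinf k⟩
  exact hbad m n hmn h

/-- The minimal inflations of simple permutations of `C` by permutations of `C` that do not
belong to `C`. -/
def obstructions (C : ∀ n, Set (Perm n)) : Set SizedPerm :=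
  {p | p ∈ inflations (simplePerms C) (nonemptyPerms C) ∧ p.2 ∉ C p.1 ∧
    ∀ q ∈ inflations (simplePerms C) (nonemptyPerms C), q.2 ∉ C q.1 → Contains q.2 p.2 → q = p}

theorem finite_obstructions {C : ∀ n, Set (Perm n)} (hC : IsPermClass C)
    (hfin : (simplePerms C).Finite) : (obstructions C).Finite := by
  refine IsAntichain.finite_of_partiallyWellOrderedOn (r := SizedPerm.Contained) ?_
    ((partiallyWellOrderedOn_inflations hfin
      (partiallyWellOrderedOn_nonemptyPerms hC hfin)).mono fun p hp => hp.1)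
  exact fun p hp q hq hpq h => hpq (hq.2.2 p hp.1 hp.2.1 h)

theorem mem_iff_forall_obstructions {C : ∀ n, Set (Perm n)} (hC : IsPermClass C) {p : SizedPerm}
    (hp : p ∈ inflations (simplePerms C) (nonemptyPerms C)) :
    p.2 ∈ C p.1 ↔ ∀ b ∈ obstructions C, ¬ Contains b.2 p.2 := by
  refine ⟨fun h b hb hbp => hb.2.1 (hC _ _ h hbp), fun h => ?_⟩
  by_contra hpC
  obtain ⟨b, ⟨hb, hbC, hbp⟩, hmin⟩ := WellFounded.has_min
    (wellFounded_lt.onFun (f := fun q : SizedPerm => q.1))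
    {q : SizedPerm | q ∈ inflations (simplePerms C) (nonemptyPerms C) ∧ q.2 ∉ C q.1 ∧
      Contains q.2 p.2} ⟨p, hp, hpC, Contains.refl _⟩
  refine h b ⟨hb, hbC, fun q hq hqC hqb => ?_⟩ hbp
  exact hqb.antisymm_of_size (not_lt.mp (hmin q ⟨hq, hqC, hqb.trans hbp⟩))

/-- The finite amount of information about a permutation that determines how it behaves as a
block of an inflation: the parts of the elements of `B` it contains, its sign, the parity of its
size, and the elements of `S` that are quotients of it. -/
def permType (S B : Set SizedPerm) (p : SizedPerm) :
    (∀ b : B, Set (Set (Fin b.1.1))) × ℤˣ × Fin 2 × Set S :=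
  (fun b => {I | EmbedsOn b.1.2 I p.2}, Equiv.Perm.sign p.2, ⟨p.1 % 2, Nat.mod_lt _ two_pos⟩,
    {s | ∃ c, IsQuotient s.1.2 p.2 c})

section permType

variable {S B : Set SizedPerm} {p q : SizedPerm}

theorem embedsOn_iff_of_permType_eq (h : permType S B p = permType S B q) {b : SizedPerm}
    (hb : b ∈ B) (I : Set (Fin b.1)) : EmbedsOn b.2 I p.2 ↔ EmbedsOn b.2 I q.2 :=
  Set.ext_iff.mp (congrFun (congrArg Prod.fst h) ⟨b, hb⟩) I

theorem sign_eq_of_permType_eq (h : permType S B p = permType S B q) :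
    Equiv.Perm.sign p.2 = Equiv.Perm.sign q.2 :=
  congrArg (fun t => t.2.1) h

theorem mod_two_eq_of_permType_eq (h : permType S B p = permType S B q) :
    p.1 % 2 = q.1 % 2 :=
  congrArg (fun t => t.2.2.1.val) h

theorem isQuotient_iff_of_permType_eq (h : permType S B p = permType S B q) {s : SizedPerm}
    (hs : s ∈ S) : (∃ c, IsQuotient s.2 p.2 c) ↔ ∃ c, IsQuotient s.2 q.2 c :=
  Set.ext_iff.mp (congrArg (fun t => t.2.2.2) h) ⟨s, hs⟩

theorem admissible_of_permType_eq {s : SizedPerm} (hs : s ∈ S) {α α' : Fin s.1 → SizedPerm}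
    (h : ∀ i, permType S B (α i) = permType S B (α' i)) (hα : Admissible s.2 α) :
    Admissible s.2 α' := fun i hm hi hc =>
  hα i hm hi ((isQuotient_iff_of_permType_eq (h i) hs).mpr hc)

theorem permType_eq_of_inflates (hS : ∀ s ∈ S, IsSimple s.2 ∧ 2 ≤ s.1) {s : SizedPerm}
    (hs : s ∈ S) {α α' : Fin s.1 → SizedPerm}
    (h : ∀ i, permType S B (α i) = permType S B (α' i)) (hp : Inflates s.2 α p.2)
    (hq : Inflates s.2 α' q.2) : permType S B p = permType S B q := by
  have hquot {p : SizedPerm} {α : Fin s.1 → SizedPerm} (hp : Inflates s.2 α p.2) :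
      {s : S | ∃ c, IsQuotient s.1.2 p.2 c} = {⟨s, hs⟩} := by
    obtain ⟨c, f, hp⟩ := hp
    ext s'
    refine ⟨fun ⟨c', h'⟩ => Subtype.ext ?_, ?_⟩
    · exact h'.simple_unique hp.toIsQuotient (hS _ s'.2).1 (hS _ hs).1 (hS _ s'.2).2 (hS _ hs).2
    · rintro rfl
      exact ⟨c, hp.toIsQuotient⟩
  refine Prod.ext (funext fun b => Set.ext fun I => ⟨?_, ?_⟩) (Prod.ext ?_ (Prod.ext ?_ ?_))
  · exact hp.embedsOn hq fun i I => (embedsOn_iff_of_permType_eq (h i) b.2 I).mp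
  · exact hq.embedsOn hp fun i I => (embedsOn_iff_of_permType_eq (h i) b.2 I).mpr
  · exact hp.sign_congr hq (fun i => sign_eq_of_permType_eq (h i))
      fun i => mod_two_eq_of_permType_eq (h i)
  · obtain ⟨c, f, hp⟩ := hp
    obtain ⟨c', f', hq⟩ := hq
    refine Fin.ext ?_
    change p.1 % 2 = q.1 % 2
    rw [hp.size_eq, hq.size_eq, Finset.sum_nat_mod,
      Finset.sum_nat_mod Finset.univ 2 fun i => (α' i).1]
    simp_rw [mod_two_eq_of_permType_eq (h _)]
  · exact (hquot hp).trans (hquot hq).symm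

end permType

theorem finite_size_eq (n : ℕ) : {p : SizedPerm | p.1 = n}.Finite := by
  refine (Set.finite_range (Sigma.mk (β := Perm) n)).subset ?_
  rintro ⟨m, π⟩ rfl
  exact ⟨π, rfl⟩

theorem isAlgebraic_sizeGenFun_permType {C : ∀ n, Set (Perm n)} (hC : IsPermClass C)
    (hfin : (simplePerms C).Finite)
    (t : (∀ b : obstructions C, Set (Set (Fin b.1.1))) × ℤˣ × Fin 2 × Set (simplePerms C)) :
    IsAlgebraic (Polynomial ℚ) (sizeGenFun fun p : {p : nonemptyPerms C //
      permType (simplePerms C) (obstructions C) p.1 = t} => p.1.1.1) := by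
  have := hfin.to_subtype
  have := (finite_obstructions hC hfin).to_subtype
  refine isAlgebraic_sizeGenFun_of_decomposition (S := simplePerms C)
    (fun p : nonemptyPerms C => p.1.1)
    (fun p => permType (simplePerms C) (obstructions C) p.1) (fun s => s.1.1)
    (fun s α p => Inflates s.1.2 (fun i => (α i).1) p.1.2 ∧
      Admissible s.1.2 fun i => (α i).1)
    (fun n => ?_) (fun p => p.2.2) (fun s => s.2.2.2) ?_ ?_ ?_ ?_ ?_ t
  · have := (finite_size_eq n).to_subtype
    exact Finite.of_injective (β := {p : SizedPerm | p.1 = n}) (fun x => ⟨x.1.1, x.2⟩)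
      fun x y h => Subtype.ext (Subtype.ext (congrArg (fun z => z.1) h))
  · rintro s α p ⟨⟨c, f, h⟩, -⟩
    exact h.size_eq
  · rintro s α p p' ⟨h, -⟩ ⟨h', -⟩
    exact Subtype.ext (h.unique h')
  · rintro s α p α' ⟨h, hadm⟩ hα
    obtain ⟨q, hq⟩ := exists_inflates s.1.2 (fun i => (α' i).1) fun i => (α' i).2.2
    have htype := permType_eq_of_inflates (fun s hs => hs.2) s.2 hα h hq
    have hqC : q.2 ∈ C q.1 := by
      rw [mem_iff_forall_obstructions hC ⟨s.1, s.2, _, fun i => (α' i).2, hq⟩]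
      intro b hb
      rw [contains_iff_embedsOn, ← embedsOn_iff_of_permType_eq htype hb, ← contains_iff_embedsOn]
      exact (mem_iff_forall_obstructions hC ⟨s.1, s.2, _, fun i => (α i).2, h⟩).mp p.2.1 b hb
    have hq0 : 0 < q.1 := by
      obtain ⟨c, f, h'⟩ := hq
      have : 0 < s.1.1 := two_pos.trans_le s.2.2.2
      exact (h'.size_pos ⟨0, this⟩).trans_le (h'.block_contains _).le
    exact ⟨⟨q, hqC, hq0⟩, ⟨hq, admissible_of_permType_eq s.2 hα hadm⟩, htype.symm⟩
  · intro p hp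
    obtain ⟨s, hs, α, hα, h⟩ := exists_decomposition hC p.2.1 hp
    exact ⟨⟨s, hs⟩, fun i => ⟨α i, hα i⟩, h⟩
  · rintro ⟨s, hs⟩ α ⟨s', hs'⟩ α' p ⟨h, hα⟩ ⟨h', hα'⟩
    obtain rfl : s = s' := by
      obtain ⟨c, f, h⟩ := h
      obtain ⟨c', f', h'⟩ := h'
      exact h.toIsQuotient.simple_unique h'.toIsQuotient hs.2.1 hs'.2.1 hs.2.2 hs'.2.2
    obtain rfl : α = α' := by
      ext1 i
      exact Subtype.ext (congrFun (h.admissible_unique h' hs.2.1 hs.2.2 hα hα') i)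
    rfl

theorem genFun_eq_sizeGenFun {C : ∀ n, Set (Perm n)} :
    (genFun fun n => {π : Perm n | π ∈ C n ∧ Equiv.Perm.sign π = 1}) =
      sizeGenFun fun p : {p : nonemptyPerms C // Equiv.Perm.sign p.1.2 = 1} => p.1.1.1 := by
  ext n
  simp only [genFun, sizeGenFun, PowerSeries.coeff_mk]
  split_ifs with hn
  · subst hn
    have : IsEmpty {x : {p : nonemptyPerms C // Equiv.Perm.sign p.1.2 = 1} // x.1.1.1 = 0} :=
      ⟨fun x => x.1.1.2.2.ne' x.2⟩
    simp
  · refine congrArg _ (Nat.card_congr (Equiv.ofBijective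
      (fun π => ⟨⟨⟨⟨n, π.1⟩, π.2.1, Nat.pos_of_ne_zero hn⟩, π.2.2⟩, rfl⟩) ⟨?_, ?_⟩))
    · intro π π' h
      have := congrArg (fun x => x.1.1.1) h
      exact Subtype.ext (sigma_mk_injective this)
    · rintro ⟨⟨⟨⟨m, π⟩, hC, h0⟩, hs⟩, rfl⟩
      exact ⟨⟨π, hC, hs⟩, rfl⟩

/-- If `C` is a permutation class containing only finitely many simple permutations,
then the generating function of the set of even permutations in `C`
is algebraic over `ℚ[x]`. -/
theorem statement2 (C : ∀ n, Set (Perm n)) (hC : IsPermClass C)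
    (hfin : FinitelyManySimples C) :
    IsAlgebraicOverQx (genFun fun n => {π : Perm n | π ∈ C n ∧ Equiv.Perm.sign π = 1}) := by
  classical
  have hS : (simplePerms C).Finite := hfin.subset fun p hp => ⟨hp.1, hp.2.1⟩
  have := hS.to_subtype
  have := (finite_obstructions hC hS).to_subtype
  let T := (∀ b : obstructions C, Set (Set (Fin b.1.1))) × ℤˣ × Fin 2 × Set (simplePerms C)
  let τ : nonemptyPerms C → T := fun p => permType (simplePerms C) (obstructions C) p.1
  let _ := Fintype.ofFinite {t : T // t.2.1 = 1}
  have key : sizeGenFun (fun p : {p : nonemptyPerms C // Equiv.Perm.sign p.1.2 = 1} => p.1.1.1) =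
      ∑ t : {t : T // t.2.1 = 1}, sizeGenFun fun p : {p : nonemptyPerms C // τ p = t.1} =>
        p.1.1.1 := by
    rw [← sizeGenFun_sigma]
    · refine sizeGenFun_congr ⟨fun p => ⟨⟨τ p.1, p.2⟩, p.1, rfl⟩,
        fun x => ⟨x.2.1, (congrArg (fun t => t.2.1) x.2.2).trans x.1.2⟩, fun _ => rfl, ?_⟩
        fun _ => rfl
      rintro ⟨⟨t, ht⟩, p, hp⟩
      obtain rfl : τ p = t := hp
      rfl
    · intro t n
      have := (finite_size_eq n).to_subtype
      exact Finite.of_injective (β := {p : SizedPerm | p.1 = n}) (fun x => ⟨x.1.1.1, x.2⟩)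
        fun x y h => Subtype.ext (Subtype.ext (Subtype.ext (congrArg (fun z => z.1) h)))
  rw [isAlgebraicOverQx_iff, genFun_eq_sizeGenFun, key]
  exact Subalgebra.sum_mem (Subalgebra.algebraicClosure (Polynomial ℚ) (PowerSeries ℚ))
    fun t _ => isAlgebraic_sizeGenFun_permType hC hS t.1
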